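/- arXiv:2206.06542 — 3 statements merged into one kernel-verified Lean document; each statement's English description precedes it below -/
import Mathlib

section
/- Let T be a finite nonempty tree and let w be a function from the edge set of T to the integers satisfying the Gauss–Bonnet vertex condition: for every vertex v, the sum of w(e) over all edges e incident to v equals 2 − deg(v). Then w(e) is odd for every edge e of T. -/
/-- **Oddness of Gauss–Bonnet weights on a tree.**
If `T` is a finite nonempty tree and `w` is an integer weighting of its edges such that
at every vertex `v` the incident edge weights sum to `2 - deg v`, then every edge
weight is odd. -/
theorem tree_gaussBonnet_weights_odd {V : Type*} [Fintype V] [Nonempty V] [DecidableEq V]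
    (G : SimpleGraph V) [DecidableRel G.Adj] (hT : G.IsTree)
    (w : Sym2 V → ℤ)
    (h : ∀ v : V, ∑ e ∈ G.incidenceFinset v, w e = 2 - (G.degree v : ℤ)) :
    ∀ e ∈ G.edgeFinset, Odd (w e) := by
  intro e he
  by_contra hodd
  rw [Int.not_odd_iff_even] at hodd
  let H : SimpleGraph V :=
    { Adj := fun a b => G.Adj a b ∧ Even (w s(a, b))
      symm := ⟨fun a b hab => ⟨hab.1.symm, by rw [Sym2.eq_swap]; exact hab.2⟩⟩
      loopless := ⟨fun a ha => G.irrefl ha.1⟩ }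
  have hHG : H ≤ G := fun a b hab => hab.1
  have hac : H.IsAcyclic := hT.isAcyclic.anti hHG
  have key : ∃ v x, H.Adj v x ∧ ∀ y, H.Adj v y → y = x := by
    obtain ⟨u, v, p, hp, hmax⟩ := SimpleGraph.Walk.exists_isPath_forall_isPath_length_le_length H
    have hnil : ¬p.Nil := by
      induction e using Sym2.ind with
      | _ a b =>
        have hab : H.Adj a b := ⟨by simpa using he, hodd⟩
        have h1 := hmax _ _ hab.toWalk (SimpleGraph.Path.singleton hab).2
        intro hn
        rw [SimpleGraph.Walk.nil_iff_length_eq] at hn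
        simp [hn] at h1
    refine ⟨v, _, (p.adj_penultimate hnil).symm, fun y hadj => ?_⟩
    apply hac.eq_penultimate_of_adj_end hp hadj
    by_contra hy
    have h1 := hmax _ _ _ (hp.concat hy hadj)
    rw [SimpleGraph.Walk.length_concat] at h1
    omega
  obtain ⟨v, x, hvx, huniq⟩ := key
  have hsum : ∑ e ∈ G.incidenceFinset v, (w e + 1) = 2 := by
    rw [Finset.sum_add_distrib, h v]
    simp
  have hmem : s(v, x) ∈ G.incidenceFinset v := by
    simpa [SimpleGraph.mk'_mem_incidenceSet_iff] using hvx.1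
  rw [← Finset.add_sum_erase _ _ hmem] at hsum
  have hrest : Even (∑ e ∈ (G.incidenceFinset v).erase s(v, x), (w e + 1)) := by
    refine Finset.even_sum _ fun f hf => ?_
    rw [Finset.mem_erase, SimpleGraph.mem_incidenceFinset] at hf
    obtain ⟨hne, hf, hvf⟩ := hf
    obtain ⟨y, rfl⟩ := Sym2.mem_iff_exists.mp hvf
    by_contra hcon
    apply hne
    rw [huniq y ⟨hf, by grind⟩]
  have := hvx.2
  grind
end

section
/- Every finite tree T admits a subset S of its edge set such that every vertex of T of degree at least 2 is incident to exactly one edge belonging to S. -/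
/-- Top-down labeling, with fuel. -/
def tclAux {V : Type*} (p c : V → V) : ℕ → V → Prop
  | 0, _ => False
  | n + 1, v => v = c (p v) ∧ ¬ tclAux p c n (p v)

theorem tcl_parent_unique {V : Type*} {G : SimpleGraph V} (hT : G.IsTree) (r v w w' : V)
    (h : G.Adj w v) (h' : G.Adj w' v) (hd : G.dist r v = G.dist r w + 1)
    (hd' : G.dist r v = G.dist r w' + 1) : w = w' := by
  obtain ⟨P, hP⟩ := hT.connected.exists_walk_length_eq_dist r w
  obtain ⟨Q, hQ⟩ := hT.connected.exists_walk_length_eq_dist r w'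
  have h1 : (P.concat h).IsPath := SimpleGraph.Walk.isPath_of_length_eq_dist _ (by simp [hP, hd])
  have h2 : (Q.concat h').IsPath := SimpleGraph.Walk.isPath_of_length_eq_dist _ (by simp [hQ, hd'])
  have h3 := (hT.existsUnique_path r v).unique h1 h2
  have := congrArg SimpleGraph.Walk.penultimate h3
  simpa using this

theorem tcl_parent_exists {V : Type*} {G : SimpleGraph V} (hT : G.IsTree) (r v : V)
    (hv : v ≠ r) : ∃ w, G.Adj w v ∧ G.dist r v = G.dist r w + 1 := by
  obtain ⟨P, hP⟩ := hT.connected.exists_walk_length_eq_dist r v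
  have hn : ¬ P.Nil := SimpleGraph.Walk.not_nil_of_ne hv.symm
  refine ⟨P.penultimate, P.adj_penultimate hn, ?_⟩
  have hl : P.dropLast.length + 1 = P.length := SimpleGraph.Walk.length_dropLast_add_one hn
  have h1 : G.dist r P.penultimate ≤ P.dropLast.length := SimpleGraph.dist_le _
  rcases hT.dist_eq_dist_add_one_of_adj r (P.adj_penultimate hn) with h | h <;> omega

/-- **Existence of a consistent labeling (black-square decomposition).**
Every finite tree admits a set `S` of its edges such that every vertex of degree at
least `2` is incident to exactly one edge of `S`. -/
theorem tree_consistent_labeling {V : Type*} [Fintype V] [DecidableEq V]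
    (G : SimpleGraph V) [DecidableRel G.Adj] (hT : G.IsTree) :
    ∃ S : Finset (Sym2 V), S ⊆ G.edgeFinset ∧
      ∀ v : V, 2 ≤ G.degree v → (S ∩ G.incidenceFinset v).card = 1 := by
  classical
  obtain ⟨r⟩ := hT.connected.nonempty
  have hp : ∀ v, ∃ w, v ≠ r → G.Adj w v ∧ G.dist r v = G.dist r w + 1 := by
    intro v
    by_cases hv : v = r
    · exact ⟨v, fun h => absurd hv h⟩
    · obtain ⟨w, hw⟩ := tcl_parent_exists hT r v hv
      exact ⟨w, fun _ => hw⟩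
  choose p hp using hp
  have hc : ∀ v, ∃ u, (∃ x, x ≠ r ∧ p x = v) → u ≠ r ∧ p u = v := by
    intro v
    by_cases h : ∃ x, x ≠ r ∧ p x = v
    · obtain ⟨x, hx⟩ := h
      exact ⟨x, fun _ => hx⟩
    · exact ⟨v, fun h' => absurd h' h⟩
  choose c hc using hc
  obtain ⟨b, hb⟩ : ∃ b : V → Prop, b = fun v => tclAux p c (G.dist r v) v := ⟨_, rfl⟩
  have hbr : ¬ b r := by simp [hb, tclAux]
  have hbs : ∀ v, v ≠ r → (b v ↔ v = c (p v) ∧ ¬ b (p v)) := by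
    intro v hv
    simp only [hb]
    rw [(hp v hv).2, tclAux]
  have hne : ∀ v, b v → v ≠ r := fun v h e => hbr (e ▸ h)
  refine ⟨(Finset.univ.filter b).image (fun v => s(v, p v)), ?_, ?_⟩
  · intro e he
    simp only [Finset.mem_image, Finset.mem_filter, Finset.mem_univ, true_and] at he
    obtain ⟨v, hv, rfl⟩ := he
    simpa using (hp v (hne v hv)).1.symm
  · intro v hdeg
    have key : ∀ u, b u → G.Adj u (p u) := fun u hu => (hp u (hne u hu)).1.symm
    rw [Finset.card_eq_one]
    by_cases hv : b v
    · refine ⟨s(v, p v), ?_⟩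
      ext e
      simp only [Finset.mem_inter, Finset.mem_image, Finset.mem_filter, Finset.mem_univ, true_and,
        Finset.mem_singleton, SimpleGraph.mem_incidenceFinset, SimpleGraph.incidenceSet,
        Set.mem_setOf_eq]
      constructor
      · rintro ⟨⟨u, hu, rfl⟩, -, hm⟩
        rcases Sym2.mem_iff.1 hm with h | h
        · rw [h]
        · exact absurd (h ▸ hv) ((hbs u (hne u hu)).1 hu).2
      · rintro rfl
        exact ⟨⟨v, hv, rfl⟩, key v hv, Sym2.mem_mk_left _ _⟩
    · have hch : ∃ x, x ≠ r ∧ p x = v := by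
        by_contra hno
        have hnb : ∀ w, G.Adj w v → v ≠ r ∧ w = p v := by
          intro w hw
          rcases hT.dist_eq_dist_add_one_of_adj r hw with h | h
          · exfalso
            have hwr : w ≠ r := by
              rintro rfl
              simp at h
            exact hno ⟨w, hwr, tcl_parent_unique hT r w _ _ (hp w hwr).1 hw.symm (hp w hwr).2 h⟩
          · have hvr : v ≠ r := by
              rintro rfl
              simp at h
            exact ⟨hvr, tcl_parent_unique hT r v _ _ hw (hp v hvr).1 h (hp v hvr).2⟩
        have : G.degree v ≤ 1 := by
          rw [← SimpleGraph.card_neighborFinset_eq_degree, Finset.card_le_one]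
          intro a ha a' ha'
          rw [SimpleGraph.mem_neighborFinset] at ha ha'
          rw [(hnb a ha.symm).2, (hnb a' ha'.symm).2]
        omega
      obtain ⟨hcr, hcp⟩ := hc v hch
      have hbc : b (c v) := (hbs _ hcr).2 (by rw [hcp]; exact ⟨rfl, hv⟩)
      refine ⟨s(c v, p (c v)), ?_⟩
      ext e
      simp only [Finset.mem_inter, Finset.mem_image, Finset.mem_filter, Finset.mem_univ, true_and,
        Finset.mem_singleton, SimpleGraph.mem_incidenceFinset, SimpleGraph.incidenceSet,
        Set.mem_setOf_eq]
      constructor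
      · rintro ⟨⟨u, hu, rfl⟩, -, hm⟩
        rcases Sym2.mem_iff.1 hm with h | h
        · exact absurd (h ▸ hu) hv
        · have h1 := ((hbs u (hne u hu)).1 hu).1
          rw [← h] at h1
          rw [← h1]
      · rintro rfl
        exact ⟨⟨c v, hbc, rfl⟩, key _ hbc, by rw [hcp]; exact Sym2.mem_mk_right _ _⟩
end

section
/- Let T be a finite tree and let ε be a function assigning to each edge of T a sign in {+1, −1}. Then there exist a function s from the vertices of T to Bool with s(u) ≠ s(v) for every pair of adjacent vertices u, v, and an injective function z from the vertices of T to the integers, such that for every edge e = {u, v} with s(u) = true and s(v) = false, one has z(u) < z(v) if and only if ε(e) = +1. -/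
theorem tree_aux (n : ℕ) : ∀ {V : Type*} [Fintype V] (G : SimpleGraph V) (_ : G.IsTree)
    (_ : Fintype.card V = n) (P : V → V → Prop),
    ∃ (s : V → Bool) (z : V → ℤ),
      Function.Injective z ∧
      (∀ u v : V, G.Adj u v → s u ≠ s v) ∧
      (∀ u v : V, G.Adj u v → s u = true → s v = false → (z u < z v ↔ P u v)) := by
  classical
  induction n with
  | zero =>
    intro V _ G hT hc P
    have := hT.1.nonempty
    exact absurd hc Fintype.card_ne_zero
  | succ n ih =>
    intro V _ G hT hc P
    rcases subsingleton_or_nontrivial V with hV | hV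
    · refine ⟨fun _ => true, fun _ => 0, fun a b _ => Subsingleton.elim a b, ?_, ?_⟩
      · intro u v h
        exact absurd (Subsingleton.elim u v) h.ne
      · intro u v h
        exact absurd (Subsingleton.elim u v) h.ne
    obtain ⟨v, hv⟩ := hT.exists_vert_degree_one_of_nontrivial
    obtain ⟨w, hw, hwu⟩ := (G.degree_eq_one_iff_existsUnique_adj).1 hv
    have hT' : (G.induce ({v}ᶜ : Set V)).IsTree :=
      ⟨hT.1.induce_compl_singleton_of_degree_eq_one hv, hT.2.induce _⟩
    obtain ⟨s, z, hz, hs, hsz⟩ := ih (G.induce ({v}ᶜ : Set V)) hT'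
      (by rw [Fintype.card_compl_set]; simp [hc]) (fun a b => P a b)
    have hwv : w ∈ ({v}ᶜ : Set V) := hw.ne'
    obtain ⟨M, hM⟩ : ∃ M : ℤ, ∀ x, z x < M ∧ -M < z x := by
      refine ⟨∑ x, |z x| + 1, fun x => ?_⟩
      have h1 : |z x| ≤ ∑ x, |z x| :=
        Finset.single_le_sum (f := fun x => |z x|) (fun i _ => abs_nonneg _) (Finset.mem_univ x)
      have := abs_le.1 h1
      constructor <;> linarith
    have key : ∃ (b : Bool) (t : ℤ), b ≠ s ⟨w, hwv⟩ ∧ (∀ x, z x ≠ t) ∧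
        (s ⟨w, hwv⟩ = true → b = false → (z ⟨w, hwv⟩ < t ↔ P w v)) ∧
        (b = true → s ⟨w, hwv⟩ = false → (t < z ⟨w, hwv⟩ ↔ P v w)) := by
      have hup : ∀ x, z x ≠ M := fun x => (hM x).1.ne
      have hdn : ∀ x, z x ≠ -M := fun x => (hM x).2.ne'
      have h := hM ⟨w, hwv⟩
      cases hsw : s ⟨w, hwv⟩
      · by_cases hp : P v w
        · exact ⟨true, -M, by simp, hdn, by simp, by simp [hp, h.2]⟩
        · exact ⟨true, M, by simp, hup, by simp, by simp [hp, h.1.le]⟩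
      · by_cases hp : P w v
        · exact ⟨false, M, by simp, hup, by simp [hp, h.1], by simp⟩
        · exact ⟨false, -M, by simp, hdn, by simp [hp, h.2.le], by simp⟩
    obtain ⟨b, t, hb, ht, h1, h2⟩ := key
    refine ⟨fun x => if h : x = v then b else s ⟨x, h⟩,
      fun x => if h : x = v then t else z ⟨x, h⟩, ?_, ?_, ?_⟩
    · intro x y hxy
      by_cases hx : x = v <;> by_cases hy : y = v <;> simp only [hx, hy, dite_true, dite_false] at hxy ⊢
      · exact absurd hxy.symm (ht _)
      · exact absurd hxy (ht _)
      · exact congrArg Subtype.val (hz hxy)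
    · intro x y hxy
      by_cases hx : x = v
      · subst hx
        obtain rfl := hwu y hxy
        simpa [hxy.ne'] using hb
      · by_cases hy : y = v
        · subst hy
          obtain rfl := hwu x hxy.symm
          simpa [hx] using hb.symm
        · simpa [hx, hy] using hs ⟨x, hx⟩ ⟨y, hy⟩ hxy
    · intro x y hxy
      by_cases hx : x = v
      · subst hx
        obtain rfl := hwu y hxy
        simpa [hxy.ne'] using h2
      · by_cases hy : y = v
        · subst hy
          obtain rfl := hwu x hxy.symm
          simpa [hx] using h1
        · simpa [hx, hy] using hsz ⟨x, hx⟩ ⟨y, hy⟩ hxy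

/-- **Height assignments for a sign-labeled tree (conditions (★)).**
Let `T` be a finite tree with each edge labeled by a sign `+1` or `-1`.  Then there are
a proper 2-coloring `s : V → Bool` of the vertices and an injective height function
`z : V → ℤ` such that for every edge `{u, v}` with `s u = true` and `s v = false`,
one has `z u < z v` exactly when the edge is labeled `+1`. -/
theorem tree_sign_height_assignment {V : Type*} [Fintype V] [DecidableEq V]
    (G : SimpleGraph V) [DecidableRel G.Adj] (hT : G.IsTree)
    (ε : Sym2 V → ℤ) (hε : ∀ e ∈ G.edgeSet, ε e = 1 ∨ ε e = -1) :
    ∃ (s : V → Bool) (z : V → ℤ),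
      Function.Injective z ∧
      (∀ u v : V, G.Adj u v → s u ≠ s v) ∧
      (∀ u v : V, G.Adj u v → s u = true → s v = false →
        (z u < z v ↔ ε s(u, v) = 1)) := by
  exact tree_aux _ G hT rfl (fun u v => ε s(u, v) = 1)
end
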